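/- Let X be a finite type, C ⊆ X³ a subset, and {·} : X⁶ → ℝ a function satisfying the orthogonality identity: for all a, b, c, d, j, k in X, Σ_{i ∈ X} {a b i; c d j} · {d a k; b c i} equals 1 if k = j and both (a, b, j) ∈ C and (c, d, j) ∈ C, and equals 0 otherwise. Let E be a finite index set, s ∈ E, and p, q, u, v distinct elements of E \ {s}. Define the flip operator A = A(s; p, q, u, v) and the reverse flip operator B on the free ℝ-vector space V on colourings f : E → X by B(g) = Σ_{k ∈ X} {g(v) g(p) k; g(q) g(u) g(s)} · g[s ↦ k]. Then for every colouring f with (f(p), f(q), f(s)) ∈ C and (f(u), f(v), f(s)) ∈ C, one has B(A(f)) = f. In particular, A is injective on the span of such admissible colourings. -/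

import Mathlib

/-- The flip operator `A(s; p, q, u, v)` on the free `ℝ`-vector space on colourings
`f : E → X`: it sends a basis colouring `f` to
`∑ x, {f(p) f(q) x; f(u) f(v) f(s)} • f[s ↦ x]`. -/
noncomputable def flipOp {X E : Type*} [Fintype X] [DecidableEq E]
    (sixj : X → X → X → X → X → X → ℝ) (s p q u v : E) :
    ((E → X) →₀ ℝ) →ₗ[ℝ] ((E → X) →₀ ℝ) :=
  Finsupp.lift ((E → X) →₀ ℝ) ℝ (E → X) fun f =>
    ∑ x : X, sixj (f p) (f q) x (f u) (f v) (f s) • Finsupp.single (Function.update f s x) 1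

/- Note: the reverse flip operator `B`, with `B(g) = ∑ k, {g(v) g(p) k; g(q) g(u) g(s)} • g[s ↦ k]`,
is exactly `flipOp sixj s v p q u`. -/

/-!
A flip followed by its reverse recolours only the slot `s`, and its matrix coefficient from `f` to
`f[s ↦ k]` is precisely the sum in the orthogonality axiom for the colours around `s`. The
composite therefore fixes the admissible colourings and kills all the others: it is the coordinate
projection of `V` onto the span of the admissible colourings.
-/

/-- The set of colourings for which both triples of edges meeting the slot `s` before the flip
`A(s; p, q, u, v)` lie in `C`. -/
def admissibleColourings {X E : Type*} (C : Set (X × X × X)) (s p q u v : E) : Set (E → X) :=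
  {f | (f p, f q, f s) ∈ C ∧ (f u, f v, f s) ∈ C}

/-- The orthogonality axiom of a pentagon tuple, with its Kronecker delta written as two
implications. -/
def SixJOrthogonality {X : Type*} [Fintype X] (C : Set (X × X × X))
    (sixj : X → X → X → X → X → X → ℝ) : Prop :=
  ∀ a b c d j k : X,
    ((k = j ∧ (a, b, j) ∈ C ∧ (c, d, j) ∈ C) →
      ∑ i : X, sixj a b i c d j * sixj d a k b c i = 1) ∧
    (¬(k = j ∧ (a, b, j) ∈ C ∧ (c, d, j) ∈ C) →
      ∑ i : X, sixj a b i c d j * sixj d a k b c i = 0)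

section

variable {X E : Type*} [Fintype X] {C : Set (X × X × X)} {sixj : X → X → X → X → X → X → ℝ}

namespace SixJOrthogonality

variable {M : Type*} [AddCommMonoid M] [Module ℝ M] {a b c d j : X}

theorem sum_smul_of_mem (horth : SixJOrthogonality C sixj) (e : X → M)
    (habj : (a, b, j) ∈ C) (hcdj : (c, d, j) ∈ C) :
    ∑ k, (∑ i, sixj a b i c d j * sixj d a k b c i) • e k = e j := by
  have hoff (k : X) (hkj : k ≠ j) : (∑ i, sixj a b i c d j * sixj d a k b c i) • e k = 0 := by
    rw [(horth a b c d j k).2 fun h => hkj h.1, zero_smul]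
  rw [Fintype.sum_eq_single j hoff, (horth a b c d j j).1 ⟨rfl, habj, hcdj⟩, one_smul]

theorem sum_smul_of_notMem (horth : SixJOrthogonality C sixj) (e : X → M)
    (hC : ¬((a, b, j) ∈ C ∧ (c, d, j) ∈ C)) :
    ∑ k, (∑ i, sixj a b i c d j * sixj d a k b c i) • e k = 0 :=
  Finset.sum_eq_zero fun k _ => by
    rw [(horth a b c d j k).2 fun h => hC h.2, zero_smul]

end SixJOrthogonality

variable [DecidableEq E] {s p q u v : E}

theorem flipOp_single_one (sixj : X → X → X → X → X → X → ℝ) (s p q u v : E) (f : E → X) :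
    flipOp sixj s p q u v (Finsupp.single f 1) =
      ∑ x, sixj (f p) (f q) x (f u) (f v) (f s) • Finsupp.single (Function.update f s x) 1 := by
  simp [flipOp]

theorem flipOp_single_update (sixj : X → X → X → X → X → X → ℝ)
    (hps : p ≠ s) (hqs : q ≠ s) (hus : u ≠ s) (hvs : v ≠ s) (f : E → X) (i : X) :
    flipOp sixj s p q u v (Finsupp.single (Function.update f s i) 1) =
      ∑ k, sixj (f p) (f q) k (f u) (f v) i • Finsupp.single (Function.update f s k) 1 := by
  simp only [flipOp_single_one, Function.update_self, Function.update_idem,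
    Function.update_of_ne hps, Function.update_of_ne hqs, Function.update_of_ne hus,
    Function.update_of_ne hvs]

theorem flipOp_flipOp_single_one (sixj sixj' : X → X → X → X → X → X → ℝ) (p' q' u' v' : E)
    (hps : p ≠ s) (hqs : q ≠ s) (hus : u ≠ s) (hvs : v ≠ s) (f : E → X) :
    flipOp sixj s p q u v (flipOp sixj' s p' q' u' v' (Finsupp.single f 1)) =
      ∑ k, (∑ i, sixj' (f p') (f q') i (f u') (f v') (f s) * sixj (f p) (f q) k (f u) (f v) i) •
        Finsupp.single (Function.update f s k) 1 := by
  simp only [flipOp_single_one sixj', map_sum, map_smul,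
    flipOp_single_update sixj hps hqs hus hvs, Finset.smul_sum, smul_smul, Finset.sum_smul]
  exact Finset.sum_comm

theorem flipOp_reverse_flipOp_single_one_of_mem (horth : SixJOrthogonality C sixj)
    (hps : p ≠ s) (hqs : q ≠ s) (hus : u ≠ s) (hvs : v ≠ s) {f : E → X}
    (hf : f ∈ admissibleColourings C s p q u v) :
    flipOp sixj s v p q u (flipOp sixj s p q u v (Finsupp.single f 1)) = Finsupp.single f 1 := by
  rw [flipOp_flipOp_single_one sixj sixj p q u v hvs hps hqs hus,
    horth.sum_smul_of_mem _ hf.1 hf.2, Function.update_eq_self]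

theorem flipOp_reverse_flipOp_single_one_of_notMem (horth : SixJOrthogonality C sixj)
    (hps : p ≠ s) (hqs : q ≠ s) (hus : u ≠ s) (hvs : v ≠ s) {f : E → X}
    (hf : f ∉ admissibleColourings C s p q u v) :
    flipOp sixj s v p q u (flipOp sixj s p q u v (Finsupp.single f 1)) = 0 := by
  rw [flipOp_flipOp_single_one sixj sixj p q u v hvs hps hqs hus,
    horth.sum_smul_of_notMem _ hf]

theorem reverse_flip_inverts_flip_general (horth : SixJOrthogonality C sixj)
    (hps : p ≠ s) (hqs : q ≠ s) (hus : u ≠ s) (hvs : v ≠ s)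
    [DecidablePred (· ∈ admissibleColourings C s p q u v)] :
    flipOp sixj s v p q u ∘ₗ flipOp sixj s p q u v =
      (Finsupp.supported ℝ ℝ (admissibleColourings C s p q u v)).subtype ∘ₗ
        Finsupp.restrictDom ℝ ℝ (admissibleColourings C s p q u v) := by
  refine Finsupp.lhom_ext' fun f => LinearMap.ext_ring ?_
  simp only [LinearMap.comp_apply, Finsupp.lsingle_apply, Submodule.subtype_apply,
    Finsupp.restrictDom_apply]
  by_cases hf : f ∈ admissibleColourings C s p q u v
  · rw [flipOp_reverse_flipOp_single_one_of_mem horth hps hqs hus hvs hf,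
      Finsupp.filter_single_of_pos _ hf]
  · rw [flipOp_reverse_flipOp_single_one_of_notMem horth hps hqs hus hvs hf,
      Finsupp.filter_single_of_neg _ hf]

theorem leftInvOn_flipOp_reverse (horth : SixJOrthogonality C sixj)
    (hps : p ≠ s) (hqs : q ≠ s) (hus : u ≠ s) (hvs : v ≠ s) :
    Set.LeftInvOn (flipOp sixj s v p q u) (flipOp sixj s p q u v)
      (Finsupp.supported ℝ ℝ (admissibleColourings C s p q u v)) := by
  classical
  intro φ hφ
  have hproj := LinearMap.congr_fun (reverse_flip_inverts_flip_general horth hps hqs hus hvs) φ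
  exact hproj.trans ((Finsupp.filter_eq_self_iff _ _).2 fun f hf =>
    hφ (Finsupp.mem_support_iff.2 hf))

end

theorem reverse_flip_inverts_flip {X E : Type*} [Fintype X] [Fintype E] [DecidableEq E]
    (C : Set (X × X × X)) (sixj : X → X → X → X → X → X → ℝ)
    (horth : ∀ a b c d j k : X,
      ((k = j ∧ (a, b, j) ∈ C ∧ (c, d, j) ∈ C) →
        ∑ i : X, sixj a b i c d j * sixj d a k b c i = 1) ∧
      (¬(k = j ∧ (a, b, j) ∈ C ∧ (c, d, j) ∈ C) →
        ∑ i : X, sixj a b i c d j * sixj d a k b c i = 0))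
    (s p q u v : E) (hps : p ≠ s) (hqs : q ≠ s) (hus : u ≠ s) (hvs : v ≠ s)
    (hpq : p ≠ q) (hpu : p ≠ u) (hpv : p ≠ v) (hqu : q ≠ u) (hqv : q ≠ v) (huv : u ≠ v) :
    (∀ f : E → X, (f p, f q, f s) ∈ C → (f u, f v, f s) ∈ C →
      (flipOp sixj s v p q u) ((flipOp sixj s p q u v) (Finsupp.single f 1)) =
        Finsupp.single f 1) ∧
    Set.InjOn (flipOp sixj s p q u v)
      (Submodule.span ℝ ((fun f : E → X => Finsupp.single f (1 : ℝ)) ''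
        {f : E → X | (f p, f q, f s) ∈ C ∧ (f u, f v, f s) ∈ C}) :
        Set ((E → X) →₀ ℝ)) := by
  have hinv := leftInvOn_flipOp_reverse horth hps hqs hus hvs
  refine ⟨fun f hfp hfu => hinv (Finsupp.single_mem_supported ℝ 1 ⟨hfp, hfu⟩), ?_⟩
  rw [← Finsupp.supported_eq_span_single]
  exact hinv.injOn
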